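/- Let ι be a finite type. For every u ∈ R and every a ∈ ι: δ_{0,a}(∂u) = 0, and for every k ≥ 1, δ_{k,a}(∂u) = δ_{k-1,a}(u). -/

import Mathlib

open MvPolynomial

/-- The higher Euler operator `δ_{k,a} u = ∑_i (-1)^i binom(k+i,k) ∂^i(∂_{k+i,a} u)`. -/
noncomputable def eulerOp {ι : Type*}
    (D : Derivation ℂ (MvPolynomial (ι × ℕ) ℂ) (MvPolynomial (ι × ℕ) ℂ))
    (k : ℕ) (a : ι) (u : MvPolynomial (ι × ℕ) ℂ) : MvPolynomial (ι × ℕ) ℂ :=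
  ∑ᶠ i : ℕ, ((-1 : ℂ) ^ i * ((k + i).choose k : ℂ)) • (⇑D)^[i] (pderiv (a, k + i) u)

lemma aux_bound {ι : Type*} (a : ι) (u : MvPolynomial (ι × ℕ) ℂ) :
    ∃ N : ℕ, ∀ n, N ≤ n → pderiv (a, n) u = 0 := by
  classical
  refine ⟨(u.vars.sup Prod.snd) + 1, fun n hn => ?_⟩
  apply pderiv_eq_zero_of_notMem_vars
  intro h
  have := Finset.le_sup (f := Prod.snd) h
  simp only at this
  omega

lemma aux_zero {ι : Type*}
    (D : Derivation ℂ (MvPolynomial (ι × ℕ) ℂ) (MvPolynomial (ι × ℕ) ℂ))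
    (hD : ∀ (a : ι) (k : ℕ), D (X (a, k)) = X (a, k + 1))
    (u : MvPolynomial (ι × ℕ) ℂ) (a : ι) :
    pderiv (a, 0) (D u) = D (pderiv (a, 0) u) := by
  classical
  have h : ⁅pderiv (R := ℂ) (a, 0), D⁆ = 0 := by
    apply MvPolynomial.derivation_ext
    rintro ⟨b, j⟩
    simp [Derivation.commutator_apply, hD, pderiv_X, Pi.single_apply, apply_ite D]
  have := congrArg (fun E => E u) h
  simpa [Derivation.commutator_apply, sub_eq_zero] using this

lemma aux_succ {ι : Type*}
    (D : Derivation ℂ (MvPolynomial (ι × ℕ) ℂ) (MvPolynomial (ι × ℕ) ℂ))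
    (hD : ∀ (a : ι) (k : ℕ), D (X (a, k)) = X (a, k + 1))
    (u : MvPolynomial (ι × ℕ) ℂ) (a : ι) (n : ℕ) :
    pderiv (a, n + 1) (D u) = D (pderiv (a, n + 1) u) + pderiv (a, n) u := by
  classical
  have h : ⁅pderiv (R := ℂ) (a, n + 1), D⁆ = pderiv (a, n) := by
    apply MvPolynomial.derivation_ext
    rintro ⟨b, j⟩
    simp [Derivation.commutator_apply, hD, pderiv_X, Pi.single_apply, apply_ite D]
  have := congrArg (fun E => E u) h
  simp only [Derivation.commutator_apply] at this
  rw [← this]; ring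

lemma aux_sum {ι : Type*}
    (D : Derivation ℂ (MvPolynomial (ι × ℕ) ℂ) (MvPolynomial (ι × ℕ) ℂ))
    (k : ℕ) (a : ι) (u : MvPolynomial (ι × ℕ) ℂ) (N : ℕ)
    (hN : ∀ n, N ≤ n → pderiv (a, n) u = 0) :
    eulerOp D k a u = ∑ i ∈ Finset.range N,
      ((-1 : ℂ) ^ i * ((k + i).choose k : ℂ)) • (⇑D)^[i] (pderiv (a, k + i) u) := by
  apply finsum_eq_sum_of_support_subset
  intro i hi
  simp only [Finset.coe_range, Set.mem_Iio]
  by_contra hc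
  apply hi
  simp only
  rw [hN (k + i) (by omega), iterate_map_zero, smul_zero]

theorem stmt_7 (ι : Type*) [Fintype ι]
    (D : Derivation ℂ (MvPolynomial (ι × ℕ) ℂ) (MvPolynomial (ι × ℕ) ℂ))
    (hD : ∀ (a : ι) (k : ℕ), D (X (a, k)) = X (a, k + 1))
    (u : MvPolynomial (ι × ℕ) ℂ) (a : ι) :
    eulerOp D 0 a (D u) = 0 ∧
      ∀ k : ℕ, 1 ≤ k → eulerOp D k a (D u) = eulerOp D (k - 1) a u := by
  obtain ⟨N, hN⟩ := aux_bound a u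
  have hN' : ∀ n, N + 1 ≤ n → pderiv (a, n) (D u) = 0 := by
    rintro (_ | n) hn
    · omega
    · rw [aux_succ D hD, hN _ (by omega), hN _ (by omega)]; simp
  constructor
  · rw [aux_sum D 0 a _ _ hN']
    have key : ∀ M : ℕ, ∑ i ∈ Finset.range (M + 1),
        ((-1 : ℂ) ^ i * ((0 + i).choose 0 : ℂ)) • (⇑D)^[i] (pderiv (a, 0 + i) (D u))
        = (-1 : ℂ) ^ M • (⇑D)^[M + 1] (pderiv (a, M) u) := by
      intro M
      induction M with
      | zero => simp [aux_zero D hD]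
      | succ M ih =>
        rw [Finset.sum_range_succ, ih]
        simp only [zero_add, aux_succ D hD, iterate_map_add, Nat.choose_zero_right,
          ← Function.iterate_succ_apply (⇑D)]
        simp only [Nat.cast_one, mul_one, pow_succ, smul_add, Nat.succ_eq_add_one]
        module
    rw [key, hN _ le_rfl, iterate_map_zero, smul_zero]
  · rintro (_ | m) hk
    · omega
    rw [aux_sum D _ a _ _ hN', Nat.add_sub_cancel,
      aux_sum D m a u (N + 1) (fun n hn => hN n (by omega))]
    have key : ∀ M : ℕ, ∑ i ∈ Finset.range (M + 1),
        ((-1 : ℂ) ^ i * ((m + 1 + i).choose (m + 1) : ℂ)) •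
          (⇑D)^[i] (pderiv (a, m + 1 + i) (D u))
        = ∑ i ∈ Finset.range (M + 1),
        ((-1 : ℂ) ^ i * ((m + i).choose m : ℂ)) • (⇑D)^[i] (pderiv (a, m + i) u)
        + ((-1 : ℂ) ^ M * ((m + 1 + M).choose (m + 1) : ℂ)) •
          (⇑D)^[M + 1] (pderiv (a, m + (M + 1)) u) := by
      intro M
      induction M with
      | zero => simp [aux_succ D hD, add_comm]
      | succ M ih =>
        rw [Finset.sum_range_succ, ih, Finset.sum_range_succ _ (M + 1)]
        have e : m + 1 + (M + 1) = (m + (M + 1)) + 1 := by omega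
        have e2 : m + 1 + M = m + (M + 1) := by omega
        have e3 : m + (M + 1 + 1) = (m + (M + 1)) + 1 := by omega
        rw [e, e2, e3, aux_succ D hD, iterate_map_add,
          ← Function.iterate_succ_apply (⇑D), Nat.choose_succ_succ]
        simp only [Nat.cast_add, pow_succ, smul_add, Nat.succ_eq_add_one]
        module
    rw [key, hN (m + (N + 1)) (by omega), iterate_map_zero, smul_zero, add_zero]
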